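/- If s = (s_{ij}) ∈ ℝ^D satisfies s_{ij} ≥ 0 for all pairs {i,j} with i,j ∈ {1,…,N−1}, then for every nonempty subset I of T the integral Z₁(s;I) diverges to +∞. -/

import Mathlib

open MeasureTheory Finset

noncomputable section

instance padicMS (p : ℕ) [Fact p.Prime] : MeasurableSpace ℚ_[p] := borel _
instance padicBS (p : ℕ) [Fact p.Prime] : BorelSpace ℚ_[p] := ⟨rfl⟩

/-- The closed unit ball of `ℚ_[p]` (i.e. `ℤ_[p]`) as a positive compact subset. -/
def padicBall (p : ℕ) [Fact p.Prime] : TopologicalSpace.PositiveCompacts ℚ_[p] where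
  carrier := Metric.closedBall 0 1
  isCompact' := isCompact_closedBall 0 1
  interior_nonempty' := ⟨0, Metric.ball_subset_interior_closedBall (Metric.mem_ball_self one_pos)⟩

/-- The Haar measure on `(ℚ_[p], +)`, normalized so that `ℤ_[p]` has measure `1`. -/
def padicHaar (p : ℕ) [Fact p.Prime] : Measure ℚ_[p] :=
  Measure.addHaarMeasure (padicBall p)

instance padicHaarSF (p : ℕ) [Fact p.Prime] : SigmaFinite (padicHaar p) := by
  unfold padicHaar; infer_instance

/-- The product of normalized Haar measures on a finite power of `ℚ_[p]`. -/
def padicPi (p : ℕ) [Fact p.Prime] (ι : Type) [Fintype ι] : Measure (ι → ℚ_[p]) :=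
  Measure.pi fun _ => padicHaar p

/-- `T = {2, …, N-2}`. -/
def Tset (N : ℕ) : Finset ℕ := Finset.Icc 2 (N - 2)

/-- The ordered pairs `(i, j)` with `i < j` and `i, j ∈ A`. -/
def pairsIn (A : Finset ℕ) : Finset (ℕ × ℕ) := (A ×ˢ A).filter fun q => q.1 < q.2

/-- The coordinates of a point of `ℚ_p^A`, as a function on `ℕ` (junk value `0` off `A`). -/
def padicCoord {p : ℕ} [Fact p.Prime] {A : Finset ℕ} (x : A → ℚ_[p]) (n : ℕ) : ℚ_[p] :=
  if h : n ∈ A then x ⟨n, h⟩ else 0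

/-- The domain of integration of `Z₁(s; I)` inside `ℤ_p^{|I|}` (off the zero locus). -/
def Z1set (p : ℕ) [Fact p.Prime] (I : Finset ℕ) : Set (↥I → ℚ_[p]) :=
  {x | (∀ i, ‖x i‖ ≤ 1 ∧ x i ≠ 0) ∧
    ∀ q ∈ pairsIn I, padicCoord x q.1 ≠ padicCoord x q.2}

/-!
Multiplication by `p` maps the domain `Z1set p I` into itself, contracts the measure by
`p ^ (-|I|)`, and multiplies the integrand by a power of `p` which is at least `p ^ |I|` as soon as
all `s i j` are nonnegative. The image of the domain thus contributes at least as much to the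
integral as the whole domain. Since the integrand is positive on the complement of the image, which
has positive measure, this is impossible for a finite integral.
-/

section Haar

open scoped Pointwise ENNReal

variable {G A : Type*} [Group G] [AddCommGroup A] [DistribMulAction G A] [TopologicalSpace A]
  [IsTopologicalAddGroup A] [LocallyCompactSpace A] [ContinuousConstSMul G A]
  [MeasurableSpace A] [BorelSpace A] (μ : Measure A) [μ.IsAddHaarMeasure] [μ.Regular]

lemma map_inv_smul_eq_distribHaarChar_smul (g : G) :
    μ.map (g⁻¹ • ·) = distribHaarChar A g • μ := by
  ext S hS
  rw [Measure.map_apply (measurable_const_smul g⁻¹) hS, Set.preimage_smul_inv,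
    ← distribHaarChar_mul]
  rfl

lemma setLIntegral_smul_set (g : G) (S : Set A) (f : A → ℝ≥0∞) :
    ∫⁻ x in g • S, f x ∂μ = distribHaarChar A g * ∫⁻ x in S, f (g • x) ∂μ := by
  have hpre : MeasurableEquiv.smul g⁻¹ ⁻¹' S = g • S := Set.preimage_smul_inv g S
  have hcancel (x : A) : g • MeasurableEquiv.smul g⁻¹ x = x := smul_inv_smul g x
  calc ∫⁻ x in g • S, f x ∂μ
      = ∫⁻ x in S, f (g • x) ∂(μ.map (MeasurableEquiv.smul g⁻¹)) := by
        simp only [MeasurableEquiv.restrict_map, lintegral_map_equiv, hpre, hcancel]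
    _ = ∫⁻ x in S, f (g • x) ∂(distribHaarChar A g • μ) := by
        rw [← map_inv_smul_eq_distribHaarChar_smul]
        rfl
    _ = distribHaarChar A g * ∫⁻ x in S, f (g • x) ∂μ := by
        rw [Measure.restrict_smul, lintegral_smul_measure, ENNReal.smul_def, smul_eq_mul]

variable {μ}

lemma measure_sdiff_smul_set_ne_zero {g : G} {S : Set A} (hg : distribHaarChar A g < 1)
    (hS₀ : μ S ≠ 0) (hS : μ S ≠ ∞) : μ (S \ g • S) ≠ 0 := by
  intro h
  have hle : μ S ≤ distribHaarChar A g * μ S := by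
    rw [distribHaarChar_mul]
    exact measure_mono_ae (ae_le_set.2 h)
  have hlt : distribHaarChar A g * μ S < 1 * μ S :=
    ENNReal.mul_lt_mul_left hS₀ hS (by exact_mod_cast hg)
  exact (hle.trans_lt hlt).ne (one_mul _).symm

lemma setLIntegral_eq_top_of_le_distribHaarChar_mul {g : G} {S : Set A} {f : A → ℝ≥0∞}
    (hg : distribHaarChar A g < 1) (hSm : MeasurableSet S) (hS₀ : μ S ≠ 0) (hS : μ S ≠ ∞)
    (hgS : g • S ⊆ S) (hf : Measurable f) (hf₀ : ∀ x ∈ S, f x ≠ 0)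
    (hfg : ∀ x ∈ S, f x ≤ distribHaarChar A g * f (g • x)) :
    ∫⁻ x in S, f x ∂μ = ∞ := by
  have himage : ∫⁻ x in S, f x ∂μ ≤ ∫⁻ x in g • S, f x ∂μ := by
    rw [setLIntegral_smul_set, ← lintegral_const_mul' _ _ ENNReal.coe_ne_top]
    exact setLIntegral_mono' hSm hfg
  have hshell : ∫⁻ x in S \ g • S, f x ∂μ ≠ 0 := by
    have hsupport : S \ g • S ⊆ f.support := fun x hx => hf₀ x hx.1
    rw [← pos_iff_ne_zero, setLIntegral_pos_iff hf, Set.inter_eq_right.2 hsupport, pos_iff_ne_zero]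
    exact measure_sdiff_smul_set_ne_zero hg hS₀ hS
  have hsplit : ∫⁻ x in g • S, f x ∂μ + ∫⁻ x in S \ g • S, f x ∂μ = ∫⁻ x in S, f x ∂μ := by
    rw [← lintegral_inter_add_sdiff f S (hSm.const_smul g), Set.inter_eq_right.2 hgS]
  by_contra hfin
  refine (ENNReal.lt_add_right hfin hshell).not_ge ?_
  calc ∫⁻ x in S, f x ∂μ + ∫⁻ x in S \ g • S, f x ∂μ
      ≤ ∫⁻ x in g • S, f x ∂μ + ∫⁻ x in S \ g • S, f x ∂μ := by gcongr
    _ = ∫⁻ x in S, f x ∂μ := hsplit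

end Haar

section PadicHaar

open scoped Pointwise NNReal

variable (p : ℕ) [Fact p.Prime]

instance padicHaar_isAddHaarMeasure : (padicHaar p).IsAddHaarMeasure := by
  unfold padicHaar; infer_instance

instance padicPi_isAddHaarMeasure (ι : Type) [Fintype ι] : (padicPi p ι).IsAddHaarMeasure := by
  unfold padicPi; infer_instance

/-- The prime `p`, as a unit of `ℚ_[p]`; units are the group through which `distribHaarChar`
measures the effect of scaling on Haar measure. -/
def padicUniformizer : ℚ_[p]ˣ :=
  Units.mk0 p (by exact_mod_cast (Fact.out : p.Prime).ne_zero)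

lemma norm_padicUniformizer : ‖(padicUniformizer p : ℚ_[p])‖ = (p : ℝ)⁻¹ :=
  Padic.norm_p

lemma padicHaar_closedBall_zero_one : padicHaar p (Metric.closedBall 0 1) = 1 :=
  Measure.addHaarMeasure_self (K₀ := padicBall p)

variable {p}

lemma padic_norm_le_inv_iff_norm_lt_one {x : ℚ_[p]} : ‖x‖ ≤ (p : ℝ)⁻¹ ↔ ‖x‖ < 1 := by
  simpa using Padic.norm_le_pow_iff_norm_lt_pow_add_one x (-1)

lemma padic_existsUnique_norm_sub_le_inv {x : ℚ_[p]} (hx : ‖x‖ ≤ 1) :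
    ∃! n : ℕ, n < p ∧ ‖x - n‖ ≤ (p : ℝ)⁻¹ := by
  obtain ⟨y, rfl⟩ : ∃ y : ℤ_[p], (y : ℚ_[p]) = x := ⟨⟨x, hx⟩, rfl⟩
  simpa only [IsLocalRing.mem_maximalIdeal, PadicInt.mem_nonunits, PadicInt.norm_def,
    PadicInt.coe_sub, PadicInt.coe_natCast, padic_norm_le_inv_iff_norm_lt_one]
    using PadicInt.existsUnique_mem_range y

variable (p)

lemma iUnion_closedBall_natCast_inv :
    ⋃ n ∈ Finset.range p, Metric.closedBall (n : ℚ_[p]) (p : ℝ)⁻¹ = Metric.closedBall 0 1 := by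
  ext x
  simp only [Set.mem_iUnion, Finset.mem_range, exists_prop, mem_closedBall_iff_norm, sub_zero]
  refine ⟨fun ⟨n, _, hn⟩ => ?_, fun hx => (padic_existsUnique_norm_sub_le_inv hx).exists⟩
  calc ‖x‖ = ‖x - n + n‖ := by rw [sub_add_cancel]
    _ ≤ max ‖x - n‖ ‖(n : ℚ_[p])‖ := Padic.nonarchimedean _ _
    _ ≤ 1 := max_le (padic_norm_le_inv_iff_norm_lt_one.1 hn).le
      (IsUltrametricDist.norm_natCast_le_one ℚ_[p] n)

lemma pairwiseDisjoint_closedBall_natCast_inv :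
    (Finset.range p : Set ℕ).PairwiseDisjoint
      fun n => Metric.closedBall (n : ℚ_[p]) (p : ℝ)⁻¹ := by
  intro n hn m hm hnm
  refine Set.disjoint_left.2 fun x hxn hxm => hnm ?_
  have hx : x ∈ Metric.closedBall 0 1 := by
    rw [← iUnion_closedBall_natCast_inv]
    exact Set.mem_biUnion hn hxn
  exact (padic_existsUnique_norm_sub_le_inv (mem_closedBall_zero_iff.1 hx)).unique
    ⟨Finset.mem_range.1 hn, mem_closedBall_iff_norm.1 hxn⟩
    ⟨Finset.mem_range.1 hm, mem_closedBall_iff_norm.1 hxm⟩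

lemma padicHaar_closedBall_zero_inv :
    padicHaar p (Metric.closedBall 0 (p : ℝ)⁻¹) = (p : ENNReal)⁻¹ := by
  have htranslate (a : ℚ_[p]) : padicHaar p (Metric.closedBall a (p : ℝ)⁻¹) =
      padicHaar p (Metric.closedBall 0 (p : ℝ)⁻¹) := by
    rw [← vadd_closedBall_zero, measure_vadd]
  have hsum := measure_biUnion_finset (μ := padicHaar p)
    (pairwiseDisjoint_closedBall_natCast_inv p) fun _ _ => measurableSet_closedBall
  simp only [iUnion_closedBall_natCast_inv, padicHaar_closedBall_zero_one, htranslate,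
    Finset.sum_const, Finset.card_range, nsmul_eq_mul] at hsum
  exact ENNReal.eq_inv_of_mul_eq_one_left (by rw [mul_comm, ← hsum])

lemma padicPi_closedBall_zero_one (ι : Type) [Fintype ι] :
    padicPi p ι (Metric.closedBall 0 1) = 1 := by
  simp [padicPi, Measure.pi_closedBall _ _ zero_le_one, padicHaar_closedBall_zero_one]

lemma distribHaarChar_padicUniformizer (ι : Type) [Fintype ι] :
    distribHaarChar (ι → ℚ_[p]) (padicUniformizer p) = (p : ℝ≥0)⁻¹ ^ Fintype.card ι := by
  have hp : (p : ℝ≥0) ≠ 0 := by exact_mod_cast (Fact.out : p.Prime).ne_zero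
  have hball : padicUniformizer p • Metric.closedBall (0 : ι → ℚ_[p]) 1 =
      Metric.closedBall 0 (p : ℝ)⁻¹ := by
    change (padicUniformizer p : ℚ_[p]) • Metric.closedBall (0 : ι → ℚ_[p]) 1 = _
    rw [smul_closedBall' (padicUniformizer p).ne_zero, smul_zero, norm_padicUniformizer, mul_one]
  have hone := padicPi_closedBall_zero_one p ι
  refine distribHaarChar_eq_of_measure_smul_eq_mul (μ := padicPi p ι)
    (hone ▸ one_ne_zero) (hone ▸ ENNReal.one_ne_top) ?_
  rw [hball, hone, padicPi, Measure.pi_closedBall _ _ (by positivity)]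
  simp only [Pi.zero_apply, padicHaar_closedBall_zero_inv, Finset.prod_const, Finset.card_univ,
    ENNReal.coe_pow, ENNReal.coe_inv hp, ENNReal.coe_natCast, mul_one]

end PadicHaar

section Domain

open scoped Pointwise

variable {p : ℕ} [Fact p.Prime] {I : Finset ℕ}

lemma padicCoord_of_mem (x : I → ℚ_[p]) {n : ℕ} (hn : n ∈ I) : padicCoord x n = x ⟨n, hn⟩ :=
  dif_pos hn

lemma padicCoord_smul (u : ℚ_[p]ˣ) (x : I → ℚ_[p]) (n : ℕ) :
    padicCoord (u • x) n = u * padicCoord x n := by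
  unfold padicCoord
  split_ifs
  · rfl
  · exact (mul_zero _).symm

lemma continuous_padicCoord (n : ℕ) : Continuous fun x : I → ℚ_[p] => padicCoord x n := by
  unfold padicCoord
  split_ifs
  · exact continuous_apply _
  · exact continuous_const

variable (p I)

lemma isOpen_Z1set : IsOpen (Z1set p I) := by
  have hunit (i : I) : IsOpen {x : I → ℚ_[p] | ‖x i‖ ≤ 1} := by
    have hball := IsUltrametricDist.isOpen_closedBall (0 : ℚ_[p]) one_ne_zero
    simpa only [Set.preimage, mem_closedBall_zero_iff] using
      hball.preimage (continuous_apply (A := fun _ : I => ℚ_[p]) i)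
  simp only [Z1set, Set.ofPred_and, Set.ofPred_forall]
  refine (isOpen_iInter_of_finite fun i => (hunit i).inter ?_).inter
    (isOpen_biInter_finset fun q _ => ?_)
  · exact isOpen_ne_fun (continuous_apply i) continuous_const
  · exact isOpen_ne_fun (continuous_padicCoord _) (continuous_padicCoord _)

lemma Z1set_nonempty : (Z1set p I).Nonempty := by
  have hp : p.Prime := Fact.out
  refine ⟨fun i => (p : ℚ_[p]) ^ (i : ℕ), fun i => ⟨?_, ?_⟩, fun q hq => ?_⟩
  · rw [norm_pow]
    exact pow_le_one₀ (norm_nonneg _) Padic.norm_p_lt_one.le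
  · exact pow_ne_zero _ (by exact_mod_cast hp.ne_zero)
  · obtain ⟨hqI, hlt⟩ := Finset.mem_filter.1 hq
    obtain ⟨h₁, h₂⟩ := Finset.mem_product.1 hqI
    rw [padicCoord_of_mem _ h₁, padicCoord_of_mem _ h₂]
    exact_mod_cast (Nat.pow_right_injective hp.two_le).ne hlt.ne

lemma padicPi_Z1set_ne_zero : padicPi p I (Z1set p I) ≠ 0 :=
  ((isOpen_Z1set p I).measure_pos _ (Z1set_nonempty p I)).ne'

lemma padicPi_Z1set_ne_top : padicPi p I (Z1set p I) ≠ ⊤ := by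
  have hsub : Z1set p I ⊆ Metric.closedBall 0 1 := fun x hx =>
    mem_closedBall_zero_iff.2 ((pi_norm_le_iff_of_nonneg zero_le_one).2 fun i => (hx.1 i).1)
  exact measure_ne_top_of_subset hsub (padicPi_closedBall_zero_one p I ▸ ENNReal.one_ne_top)

variable {p I}

lemma smul_Z1set_subset {u : ℚ_[p]ˣ} (hu : ‖(u : ℚ_[p])‖ ≤ 1) :
    u • Z1set p I ⊆ Z1set p I := by
  rintro _ ⟨x, hx, rfl⟩
  refine ⟨fun i => ⟨?_, mul_ne_zero u.ne_zero (hx.1 i).2⟩, fun q hq => ?_⟩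
  · exact (norm_mul _ _).trans_le (mul_le_one₀ hu (norm_nonneg _) (hx.1 i).1)
  · change padicCoord (u • x) q.1 ≠ padicCoord (u • x) q.2
    rw [padicCoord_smul, padicCoord_smul]
    exact (mul_right_injective₀ u.ne_zero).ne (hx.2 q hq)

end Domain

section Integrand

variable {p : ℕ} [Fact p.Prime] {I : Finset ℕ} (s : ℕ → ℕ → ℝ) (e : ℕ → ℝ)

/-- The integrand of a local zeta function attached to the arrangement of the hyperplanes
`x i = x j` and `x i = 0`, with exponents `s i j` on the former and `-e i` on the latter. -/
def zetaIntegrand (x : I → ℚ_[p]) : ℝ :=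
  (∏ q ∈ pairsIn I, ‖padicCoord x q.1 - padicCoord x q.2‖ ^ s q.1 q.2) *
    ∏ i ∈ I, ‖padicCoord x i‖ ^ (-e i)

lemma measurable_zetaIntegrand : Measurable (zetaIntegrand (p := p) (I := I) s e) := by
  unfold zetaIntegrand
  refine (Finset.measurable_prod _ fun q _ => ?_).mul (Finset.measurable_prod _ fun i _ => ?_)
  · exact ((continuous_padicCoord q.1).sub
      (continuous_padicCoord q.2)).norm.measurable.pow_const _
  · exact (continuous_padicCoord i).norm.measurable.pow_const _

lemma zetaIntegrand_pos {x : I → ℚ_[p]} (hx : x ∈ Z1set p I) : 0 < zetaIntegrand s e x := by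
  refine mul_pos (Finset.prod_pos fun q hq => ?_) (Finset.prod_pos fun i hi => ?_)
  · exact Real.rpow_pos_of_pos (norm_pos_iff.2 (sub_ne_zero.2 (hx.2 q hq))) _
  · rw [padicCoord_of_mem x hi]
    exact Real.rpow_pos_of_pos (norm_pos_iff.2 (hx.1 ⟨i, hi⟩).2) _

lemma zetaIntegrand_smul (u : ℚ_[p]ˣ) (x : I → ℚ_[p]) :
    zetaIntegrand s e (u • x) =
      ‖(u : ℚ_[p])‖ ^ (∑ q ∈ pairsIn I, s q.1 q.2 - ∑ i ∈ I, e i) * zetaIntegrand s e x := by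
  have hu : 0 < ‖(u : ℚ_[p])‖ := norm_pos_iff.2 u.ne_zero
  simp only [zetaIntegrand, padicCoord_smul, ← mul_sub, norm_mul,
    Real.mul_rpow hu.le (norm_nonneg _), Finset.prod_mul_distrib, ← Real.rpow_sum_of_pos hu,
    sub_eq_add_neg (∑ q ∈ pairsIn I, s q.1 q.2), ← Finset.sum_neg_distrib, Real.rpow_add hu]
  ring

variable {s e}

lemma zetaIntegrand_le_norm_pow_card_mul {u : ℚ_[p]ˣ} (hu : ‖(u : ℚ_[p])‖ ≤ 1)
    (he : I.card + ∑ q ∈ pairsIn I, s q.1 q.2 ≤ ∑ i ∈ I, e i) {x : I → ℚ_[p]}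
    (hx : x ∈ Z1set p I) :
    zetaIntegrand s e x ≤ ‖(u : ℚ_[p])‖ ^ I.card * zetaIntegrand s e (u • x) := by
  have hu₀ : 0 < ‖(u : ℚ_[p])‖ := norm_pos_iff.2 u.ne_zero
  rw [zetaIntegrand_smul, ← mul_assoc, ← Real.rpow_natCast, ← Real.rpow_add hu₀]
  exact le_mul_of_one_le_left (zetaIntegrand_pos s e hx).le
    (Real.one_le_rpow_of_pos_of_le_one_of_nonpos hu₀ hu (by linarith))

theorem setLIntegral_zetaIntegrand_eq_top (hI : I.Nonempty)
    (he : I.card + ∑ q ∈ pairsIn I, s q.1 q.2 ≤ ∑ i ∈ I, e i) :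
    ∫⁻ x in Z1set p I, ENNReal.ofReal (zetaIntegrand s e x) ∂(padicPi p I) = ⊤ := by
  have hp : p.Prime := Fact.out
  have hchar := distribHaarChar_padicUniformizer p I
  rw [Fintype.card_coe] at hchar
  have hcontract : ‖(padicUniformizer p : ℚ_[p])‖ ≤ 1 := Padic.norm_p_lt_one.le
  refine setLIntegral_eq_top_of_le_distribHaarChar_mul (g := padicUniformizer p) ?_
    (isOpen_Z1set p I).measurableSet (padicPi_Z1set_ne_zero p I) (padicPi_Z1set_ne_top p I)
    (smul_Z1set_subset hcontract) (measurable_zetaIntegrand s e).ennreal_ofReal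
    (fun x hx => (ENNReal.ofReal_pos.2 (zetaIntegrand_pos s e hx)).ne') fun x hx => ?_
  · rw [hchar]
    exact pow_lt_one₀ zero_le (inv_lt_one_of_one_lt₀ (by exact_mod_cast hp.one_lt))
      hI.card_ne_zero
  · have hscalar : ((distribHaarChar (I → ℚ_[p]) (padicUniformizer p) : NNReal) : ENNReal) =
        ENNReal.ofReal (‖(padicUniformizer p : ℚ_[p])‖ ^ I.card) := by
      rw [hchar, norm_padicUniformizer, ← ENNReal.ofReal_coe_nnreal]
      norm_num
    rw [hscalar, ← ENNReal.ofReal_mul (by positivity)]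
    exact ENNReal.ofReal_le_ofReal (zetaIntegrand_le_norm_pow_card_mul hcontract he hx)

end Integrand

lemma sum_pairsIn_le_sum_erase {A B : Finset ℕ} (hAB : A ⊆ B) {s : ℕ → ℕ → ℝ}
    (hs : ∀ i ∈ A, ∀ j ∈ B.erase i, 0 ≤ s i j) :
    ∑ q ∈ pairsIn A, s q.1 q.2 ≤ ∑ i ∈ A, ∑ j ∈ B.erase i, s i j := by
  simp only [pairsIn, Finset.sum_filter, Finset.sum_product]
  simp only [← Finset.sum_filter]
  refine Finset.sum_le_sum fun i hi =>
    Finset.sum_le_sum_of_subset_of_nonneg (fun j hj => ?_) fun j hj _ => hs i hi j hj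
  obtain ⟨hjA, hij⟩ := Finset.mem_filter.1 hj
  exact Finset.mem_erase.2 ⟨hij.ne', hAB hjA⟩

lemma Tset_subset_Icc (N : ℕ) : Tset N ⊆ Finset.Icc 1 (N - 1) :=
  Finset.Icc_subset_Icc one_le_two (by omega)

/-- If `s_{ij} ≥ 0` for all pairs `{i,j}` with `i, j ∈ {1, …, N-1}`, then `Z₁(s; I)`
diverges to `+∞` for every nonempty `I ⊆ T`. -/
theorem Z1_diverges_of_nonneg (p : ℕ) [Fact p.Prime] (N : ℕ) (hN : 4 ≤ N)
    (s : ℕ → ℕ → ℝ) (hsym : ∀ i j, s i j = s j i)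
    (hpos : ∀ i ∈ Finset.Icc 1 (N - 1), ∀ j ∈ Finset.Icc 1 (N - 1), 0 ≤ s i j) :
    ∀ I : Finset ℕ, I ⊆ Tset N → I.Nonempty →
      ∫⁻ x in Z1set p I,
        ENNReal.ofReal
          ((∏ q ∈ pairsIn I, ‖padicCoord x q.1 - padicCoord x q.2‖ ^ s q.1 q.2) *
            ∏ i ∈ I, ‖padicCoord x i‖ ^
              (-(2 + s 1 i + s (N - 1) i + ∑ j ∈ (Tset N).erase i, s i j)))
        ∂(padicPi p ↥I) = ⊤ := by
  intro I hIT hI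
  have hT {i : ℕ} (hi : i ∈ Tset N) : i ∈ Finset.Icc 1 (N - 1) := Tset_subset_Icc N hi
  have hpairs := sum_pairsIn_le_sum_erase hIT fun i hi j hj =>
    hpos i (hT (hIT hi)) j (hT (Finset.mem_of_mem_erase hj))
  have hsum_one := Finset.sum_nonneg fun i hi =>
    hpos 1 (Finset.left_mem_Icc.2 (by omega)) i (hT (hIT hi))
  have hsum_last := Finset.sum_nonneg fun i hi =>
    hpos (N - 1) (Finset.right_mem_Icc.2 (by omega)) i (hT (hIT hi))
  refine setLIntegral_zetaIntegrand_eq_top hI ?_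
  simp only [Finset.sum_add_distrib, Finset.sum_const, nsmul_eq_mul]
  linarith [I.card.cast_nonneg (α := ℝ)]
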